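/- Let Σ ⊂ ℝ^{2n} be a smooth compact hypersurface with exterior unit normal ν satisfying ⟨ν(z), z⟩ > R₁ for all z ∈ Σ, with contact form α_x(X) = ½⟨X, Jx⟩. If γ : [0, T] → Σ is a T-periodic Reeb orbit (γ'(t) = R_α(γ(t))), then T ≥ π·R₁². -/

import Mathlib

open scoped RealInnerProductSpace

theorem wirtinger_aux (T : ℝ) (hT : 0 < T) (f f' : ℝ → ℝ)
    (hf : ∀ t, HasDerivAt f (f' t) t) (hf'c : Continuous f') (hper : f T = f 0)
    (hmean : ∫ t in (0:ℝ)..T, f t = 0) :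
    ∫ t in (0:ℝ)..T, f t ^ 2 ≤ (T / (2 * Real.pi)) ^ 2 * ∫ t in (0:ℝ)..T, f' t ^ 2 := by
  have hfc : Continuous f := continuous_iff_continuousAt.2 fun t => (hf t).continuousAt
  have hL : ∀ g : ℝ → ℝ, Continuous g →
      MeasureTheory.MemLp (fun t => (g t : ℂ)) 2
        (MeasureTheory.volume.restrict (Set.Ioc 0 T)) := by
    intro g hg
    have hc : Continuous (fun t => (g t : ℂ)) := Complex.continuous_ofReal.comp hg
    obtain ⟨C, hC⟩ := isCompact_Icc.exists_bound_of_continuousOn (s := Set.Icc 0 T)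
      hc.continuousOn
    refine MeasureTheory.MemLp.of_bound hc.aestronglyMeasurable C ?_
    rw [MeasureTheory.ae_restrict_iff' measurableSet_Ioc]
    exact Filter.Eventually.of_forall fun x hx => hC x (Set.Ioc_subset_Icc_self hx)
  have P1 := hasSum_sq_fourierCoeffOn hT (hL f hfc)
  have P2 := hasSum_sq_fourierCoeffOn hT (hL f' hf'c)
  have key : ∀ n : ℤ, ‖fourierCoeffOn hT (fun t => (f t : ℂ)) n‖ ^ 2 ≤
      (T / (2 * Real.pi)) ^ 2 * ‖fourierCoeffOn hT (fun t => (f' t : ℂ)) n‖ ^ 2 := by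
    intro n
    by_cases hn : n = 0
    · subst hn
      have : fourierCoeffOn hT (fun t => (f t : ℂ)) 0 = 0 := by
        rw [fourierCoeffOn_eq_integral]
        simp [intervalIntegral.integral_ofReal, hmean]
      rw [this]
      rw [norm_zero, zero_pow two_ne_zero]
      positivity
    · have h := fourierCoeffOn_of_hasDerivAt hT (f := fun t => (f t : ℂ))
        (f' := fun t => (f' t : ℂ)) hn (fun x _ => (hf x).ofReal_comp)
        ((Complex.continuous_ofReal.comp hf'c).intervalIntegrable _ _)
      rw [h, hper, ← mul_pow]
      have hn1 : (1:ℝ) ≤ |(n:ℝ)| := by exact_mod_cast Int.one_le_abs hn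
      have hpi := Real.pi_pos
      gcongr
      simp only [sub_self, mul_zero, zero_sub, Complex.ofReal_zero, sub_zero, norm_mul, norm_neg,
        norm_div, norm_one, Complex.norm_real, Complex.norm_I, Complex.norm_intCast, mul_one,
        Complex.norm_ofNat, Real.norm_eq_abs, abs_of_pos hT, abs_of_pos hpi]
      rw [← mul_assoc]
      gcongr
      rw [one_div_mul_eq_div]
      exact div_le_div_of_nonneg_left hT.le (by positivity)
        (le_mul_of_one_le_right (by positivity) hn1)
  have h := hasSum_le key P1 (P2.mul_left _)
  simp only [Complex.norm_real, Real.norm_eq_abs, sq_abs, sub_zero, smul_eq_mul] at h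
  rw [mul_left_comm] at h
  exact le_of_mul_le_mul_left h (inv_pos.2 hT)

/-- lower bound `T ≥ π R₁²` for the period of a closed Reeb
orbit on a hypersurface `Σ ⊂ ℝ^{2n}` (modelled as a real inner product space
with isometric complex structure `J`) whose exterior unit normal `ν`
satisfies `⟨ν(z), z⟩ > R₁` along the orbit; the contact form is
`α_x(X) = ½⟨X, Jx⟩`, and the Reeb condition is expressed by `α(γ') = 1`
together with `⟨Jγ', Y⟩ = 0` for all tangent vectors `Y ⊥ ν`. -/
theorem stmt13 {E : Type*} [NormedAddCommGroup E] [InnerProductSpace ℝ E]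
    [FiniteDimensional ℝ E]
    (J : E →ₗ[ℝ] E) (hJiso : ∀ v w : E, ⟪J v, J w⟫ = ⟪v, w⟫)
    (hJsq : ∀ v : E, J (J v) = -v)
    (R₁ T : ℝ) (hR₁ : 0 < R₁) (hT : 0 < T)
    (γ γ' : ℝ → E) (hγ : ∀ t, HasDerivAt γ (γ' t) t) (hγ'c : Continuous γ')
    (hper : ∀ t, γ (t + T) = γ t)
    (ν : ℝ → E) (hν : ∀ t, ‖ν t‖ = 1)
    (hνγ : ∀ t, R₁ < ⟪ν t, γ t⟫)
    (hα : ∀ t, (1 / 2 : ℝ) * ⟪γ' t, J (γ t)⟫ = 1)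
    (hReeb : ∀ t, ∀ Y : E, ⟪ν t, Y⟫ = 0 → ⟪J (γ' t), Y⟫ = 0) :
    Real.pi * R₁ ^ 2 ≤ T := by
  have hpi := Real.pi_pos
  have hγc : Continuous γ := continuous_iff_continuousAt.2 fun t => (hγ t).continuousAt
  have hJn : ∀ v, ‖J v‖ = ‖v‖ := by
    intro v
    have := hJiso v v
    rw [real_inner_self_eq_norm_sq, real_inner_self_eq_norm_sq] at this
    exact (sq_eq_sq₀ (norm_nonneg _) (norm_nonneg _)).1 this
  have hJc : Continuous J := J.continuous_of_finiteDimensional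
  -- the bound on the Reeb vector field
  have hbound : ∀ t, ‖γ' t‖ ^ 2 ≤ 4 / R₁ ^ 2 := by
    intro t
    set l : ℝ := ⟪ν t, J (γ' t)⟫ with hl
    have hνν : ⟪ν t, ν t⟫ = 1 := by rw [real_inner_self_eq_norm_sq, hν]; norm_num
    have h0 : ⟪ν t, J (γ' t) - l • ν t⟫ = 0 := by
      rw [inner_sub_right, inner_smul_right, hνν]; simp [hl]
    have h1 := hReeb t _ h0
    have h2 : J (γ' t) - l • ν t = 0 := by
      rw [← inner_self_eq_zero (𝕜 := ℝ)]
      nth_rw 1 [inner_sub_left]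
      rw [h1, inner_smul_left, h0]; simp
    have h3 : J (γ' t) = l • ν t := sub_eq_zero.1 h2
    have h4 : ⟪J (γ' t), γ t⟫ = -2 := by
      have := hJiso (J (γ' t)) (γ t)
      rw [hJsq, inner_neg_left] at this
      linarith [hα t]
    rw [h3, inner_smul_left] at h4
    simp only [conj_trivial] at h4
    have h5 : ‖γ' t‖ ^ 2 = l ^ 2 := by
      rw [← hJn, h3, norm_smul, hν, mul_one, Real.norm_eq_abs, sq_abs]
    rw [h5, le_div_iff₀ (by positivity)]
    have h6 := hνγ t
    have h7 : R₁ ^ 2 ≤ ⟪ν t, γ t⟫ ^ 2 := by gcongr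
    calc l ^ 2 * R₁ ^ 2 ≤ l ^ 2 * ⟪ν t, γ t⟫ ^ 2 := by gcongr
      _ = (l * ⟪ν t, γ t⟫) ^ 2 := by ring
      _ = 4 := by rw [h4]; norm_num
  set m : E := T⁻¹ • ∫ t in (0:ℝ)..T, γ t with hm
  set g : ℝ → E := fun t => γ t - m with hg
  have hgc : Continuous g := hγc.sub continuous_const
  have hgm : ∫ t in (0:ℝ)..T, g t = 0 := by
    rw [hg, intervalIntegral.integral_sub (hγc.intervalIntegrable _ _)
      (continuous_const.intervalIntegrable _ _), intervalIntegral.integral_const, hm, smul_smul]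
    simp [hT.ne']
  have hγT : γ T = γ 0 := by simpa using hper 0
  -- Wirtinger's inequality
  have hW : ∫ t in (0:ℝ)..T, ‖g t‖ ^ 2 ≤
      (T / (2 * Real.pi)) ^ 2 * ∫ t in (0:ℝ)..T, ‖γ' t‖ ^ 2 := by
    let b := stdOrthonormalBasis ℝ E
    have hb : ∀ v : E, ‖v‖ ^ 2 = ∑ i, ⟪b i, v⟫ ^ 2 := fun v => (b.sum_sq_inner_right v).symm
    simp_rw [hb]
    rw [intervalIntegral.integral_finsetSum, intervalIntegral.integral_finsetSum, Finset.mul_sum]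
    · refine Finset.sum_le_sum fun i _ => ?_
      refine wirtinger_aux T hT (fun t => ⟪b i, g t⟫) (fun t => ⟪b i, γ' t⟫) ?_ ?_ ?_ ?_
      · intro t
        have h1 : HasDerivAt g (γ' t) t := (hγ t).sub_const m
        simpa using (hasDerivAt_const t (b i)).inner ℝ h1
      · fun_prop
      · simp [hg, hγT]
      · have := (innerSL ℝ (b i)).intervalIntegral_comp_comm
          (hgc.intervalIntegrable (μ := MeasureTheory.volume) 0 T)
        simpa [hgm] using this
    · intro i _
      exact Continuous.intervalIntegrable (by fun_prop) _ _
    · intro i _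
      exact Continuous.intervalIntegrable (by fun_prop) _ _
  set A : ℝ := ∫ t in (0:ℝ)..T, ‖γ' t‖ ^ 2 with hA
  have hAle : A ≤ T * (4 / R₁ ^ 2) := by
    have h := intervalIntegral.integral_mono_on (μ := MeasureTheory.volume) hT.le
      (Continuous.intervalIntegrable (by fun_prop : Continuous fun t => ‖γ' t‖ ^ 2) 0 T)
      (continuous_const.intervalIntegrable 0 T) (fun t _ => hbound t)
    rw [intervalIntegral.integral_const, sub_zero, smul_eq_mul] at h
    exact h
  have hm0 : ∫ t in (0:ℝ)..T, ⟪γ' t, J m⟫ = 0 := by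
    have h := intervalIntegral.integral_eq_sub_of_hasDerivAt (a := 0) (b := T)
      (f := fun t => ⟪γ t, J m⟫) (f' := fun t => ⟪γ' t, J m⟫)
      (fun t _ => by simpa using (hγ t).inner ℝ (hasDerivAt_const t (J m)))
      (Continuous.intervalIntegrable (by fun_prop) _ _)
    rw [h, hγT, sub_self]
  set c : ℝ := T / (2 * Real.pi) with hc
  have hcpos : 0 < c := by positivity
  have hpt : ∀ t, 2 - ⟪γ' t, J m⟫ ≤ (c * ‖γ' t‖ ^ 2 + c⁻¹ * ‖g t‖ ^ 2) / 2 := by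
    intro t
    have h1 : ⟪γ' t, J (g t)⟫ = 2 - ⟪γ' t, J m⟫ := by
      simp only [hg, map_sub, inner_sub_right]
      linarith [hα t]
    rw [← h1]
    have h2 := real_inner_le_norm (γ' t) (J (g t))
    rw [hJn] at h2
    have h3 : c * ‖γ' t‖ ^ 2 + c⁻¹ * ‖g t‖ ^ 2 - 2 * (‖γ' t‖ * ‖g t‖)
        = c⁻¹ * (c * ‖γ' t‖ - ‖g t‖) ^ 2 := by
      field_simp
      ring
    have h4 : 0 ≤ c⁻¹ * (c * ‖γ' t‖ - ‖g t‖) ^ 2 := by positivity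
    linarith
  have hint := intervalIntegral.integral_mono_on (μ := MeasureTheory.volume) hT.le
    (Continuous.intervalIntegrable (by fun_prop : Continuous fun t => 2 - ⟪γ' t, J m⟫) 0 T)
    (Continuous.intervalIntegrable
      (by fun_prop : Continuous fun t => (c * ‖γ' t‖ ^ 2 + c⁻¹ * ‖g t‖ ^ 2) / 2) 0 T)
    (fun t _ => hpt t)
  rw [intervalIntegral.integral_sub (continuous_const.intervalIntegrable _ _)
      (Continuous.intervalIntegrable (by fun_prop) _ _), hm0, intervalIntegral.integral_div,
    intervalIntegral.integral_add (Continuous.intervalIntegrable (by fun_prop) _ _)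
      (Continuous.intervalIntegrable (by fun_prop) _ _),
    intervalIntegral.integral_const_mul, intervalIntegral.integral_const_mul,
    intervalIntegral.integral_const, ← hA] at hint
  simp only [sub_zero, smul_eq_mul] at hint
  have h1 : c⁻¹ * (∫ t in (0:ℝ)..T, ‖g t‖ ^ 2) ≤ c * A := by
    calc _ ≤ c⁻¹ * (c ^ 2 * A) := by gcongr
      _ = c * A := by field_simp
  have h2 : T * 2 ≤ c * (T * (4 / R₁ ^ 2)) := by
    have : c * A ≤ c * (T * (4 / R₁ ^ 2)) := by gcongr
    linarith
  have h3 : c * (T * (4 / R₁ ^ 2)) = T * 2 * (T / (Real.pi * R₁ ^ 2)) := by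
    rw [hc]; field_simp; ring
  rw [h3] at h2
  have h4 : 1 ≤ T / (Real.pi * R₁ ^ 2) := by
    by_contra! h
    nlinarith
  rwa [le_div_iff₀ (by positivity), one_mul] at h4
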